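/- Let [[A, B],[B*, C]] be a positive semidefinite 2×2 block matrix with k×k blocks, and let e_t(X) denote the t-th elementary symmetric polynomial of the eigenvalues of X. Then for each t ∈ {1,…,k}: e_t(A)e_t(C) + e_t(B*)e_t(B) ≥ e_t(AC) + e_t(B*B). -/

import Mathlib

open Matrix BigOperators ComplexOrder

/-- The t-th elementary symmetric function of the eigenvalues of a complex matrix
(the eigenvalues counted as the roots of the characteristic polynomial). -/
noncomputable def esym {k : ℕ} (t : ℕ) (X : Matrix (Fin k) (Fin k) ℂ) : ℂ :=
  X.charpoly.roots.esymm t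

/-!
With `∧ᵗX` the `t`-th compound matrix of `X`, one has `e_t(X) = tr(∧ᵗX)`. By Cauchy–Binet,
compounds are multiplicative and send positive semidefinite matrices to positive semidefinite
ones; moreover `[[∧ᵗA, ∧ᵗB], [∧ᵗB*, ∧ᵗC]]` is a principal submatrix of `∧ᵗ[[A, B], [B*, C]]`.
This reduces the inequality to `t = 1`. That case is itself a consequence of the positivity of
the second compound `∧²M` of `M = [[A, B], [B*, C]]`: writing `i'` for the copy of the index `i` in
the second block, sum the values of the form `∧²M` at the vectors `eᵢ ∧ eⱼ' - eⱼ ∧ eᵢ'`.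
-/

open Finset
open scoped Nat

section Compound

variable {ι l m n R : Type*} [Fintype ι] [DecidableEq ι] [CommRing R]

/-- The compound matrix `∧ᵗX`, `t = card ι`, whose entries are the `t × t` minors of `X`. Rows and
columns are indexed by all functions rather than by increasing ones, so that no order on the
indices is needed; the price is a factor `t!` in the trace and in the Cauchy–Binet formula. -/
def compound (ι : Type*) [Fintype ι] [DecidableEq ι] (X : Matrix m n R) :
    Matrix (ι → m) (ι → n) R :=
  of fun f g => (X.submatrix f g).det

theorem compound_apply (X : Matrix m n R) (f : ι → m) (g : ι → n) :
    compound ι X f g = (X.submatrix f g).det := rfl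

theorem compound_conjTranspose [StarRing R] (X : Matrix m n R) :
    compound ι Xᴴ = (compound ι X)ᴴ := by
  ext f g
  rw [conjTranspose_apply, compound_apply, compound_apply, ← conjTranspose_submatrix,
    det_conjTranspose]

theorem det_submatrix_mul_eq_sum [Fintype m] (X : Matrix l m R) (Y : Matrix m n R) (f : ι → l)
    (g : ι → n) :
    ((X * Y).submatrix f g).det = ∑ h : ι → m, (∏ i, X (f i) (h i)) * (Y.submatrix h g).det := by
  classical
  have rows : (X * Y).submatrix f g = fun i => ∑ a, X (f i) a • fun j => Y a (g j) := by
    ext i j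
    simp [mul_apply]
  rw [rows]
  refine ((detRowAlternating (n := ι) (R := R)).toMultilinearMap.map_sum _).trans ?_
  exact sum_congr rfl fun h _ => (detRowAlternating (n := ι) (R := R)).map_smul_univ
    (fun i => X (f i) (h i)) fun i j => Y (h i) (g j)

theorem compound_mul [Fintype m] (X : Matrix l m R) (Y : Matrix m n R) :
    compound ι X * compound ι Y = ((Fintype.card ι)! : R) • compound ι (X * Y) := by
  ext f g
  have signed_minor (σ : Equiv.Perm ι) :
      (σ.sign : R) * ((X * Y).submatrix (f ∘ σ) g).det = compound ι (X * Y) f g := by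
    rw [show (X * Y).submatrix (f ∘ σ) g = ((X * Y).submatrix f g).submatrix σ id from rfl,
      det_permute, ← mul_assoc, ← Int.cast_mul, Int.units_coe_mul_self, Int.cast_one, one_mul,
      compound_apply]
  calc (compound ι X * compound ι Y) f g
      = ∑ h : ι → m, ∑ σ : Equiv.Perm ι,
          (σ.sign : R) * ((∏ i, X (f (σ i)) (h i)) * (Y.submatrix h g).det) := by
        simp only [mul_apply, compound_apply, det_apply' (X.submatrix f _), sum_mul,
          submatrix_apply, mul_assoc]
    _ = ∑ σ : Equiv.Perm ι, (σ.sign : R) * ((X * Y).submatrix (f ∘ σ) g).det := by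
        rw [sum_comm]
        simp only [det_submatrix_mul_eq_sum, mul_sum, Function.comp_apply]
    _ = (((Fintype.card ι)! : R) • compound ι (X * Y)) f g := by
        simp only [signed_minor, sum_const, Finset.card_univ, Fintype.card_perm, nsmul_eq_mul,
          Matrix.smul_apply, smul_eq_mul]

end Compound

section Embedding

variable {ι n R : Type*} [Fintype ι]

theorem card_filter_map_univ_eq [Fintype n] [DecidableEq n] {s : Finset n}
    (hs : #s = Fintype.card ι) : #{f : ι ↪ n | univ.map f = s} = (Fintype.card ι)! := by
  have card_eq : #(univ : Finset (ι ↪ s)) = (Fintype.card ι)! := by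
    rw [Finset.card_univ, Fintype.card_embedding_eq, Fintype.card_coe, hs, Nat.descFactorial_self]
  rw [← card_eq]
  symm
  refine card_bij (fun g _ => g.trans (.subtype _)) (fun g _ => ?_) (fun g _ g' _ h => ?_)
    fun f hf => ?_
  · refine mem_filter.2 ⟨mem_univ _, eq_of_subset_of_card_le (fun x hx => ?_) ?_⟩
    · obtain ⟨i, -, rfl⟩ := mem_map.1 hx
      exact (g i).2
    · rw [card_map, Finset.card_univ, hs]
  · ext i
    exact DFunLike.congr_fun h i
  · obtain rfl := (mem_filter.1 hf).2
    exact ⟨f.codRestrict _ fun i => mem_map_of_mem f (mem_univ i), mem_univ _, rfl⟩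

theorem det_submatrix_embedding [DecidableEq ι] [DecidableEq n] [CommRing R] (X : Matrix n n R)
    (f : ι ↪ n) :
    (X.submatrix f f).det = (X.submatrix (Subtype.val : univ.map f → n) Subtype.val).det := by
  let e : ι ≃ univ.map f :=
    f.toEquivRange.trans (Equiv.subtypeEquivRight fun x => by simp)
  exact det_submatrix_equiv_self e (X.submatrix Subtype.val Subtype.val)

end Embedding

section PrincipalMinorSum

variable {ι n R K : Type*} [Fintype ι] [DecidableEq ι] [Fintype n] [DecidableEq n] [CommRing R]
  [Field K]

/-- The sum of the principal `t × t` minors of `X`, that is, the `t`-th elementary symmetric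
function `e_t(X)` of the eigenvalues of `X`, expressed without leaving the base ring. -/
def principalMinorSum (t : ℕ) (X : Matrix n n R) : R :=
  ∑ s ∈ univ.powersetCard t, (X.submatrix (Subtype.val : s → n) Subtype.val).det

theorem esymm_roots_charpoly_eq_principalMinorSum {X : Matrix n n K} (hX : X.charpoly.Splits)
    {t : ℕ} (ht : t ≤ Fintype.card n) : X.charpoly.roots.esymm t = principalMinorSum t X := by
  have vieta := Polynomial.coeff_eq_esymm_roots_of_splits hX
    (k := Fintype.card n - t) (by simp [charpoly_natDegree_eq_dim])
  rw [X.charpoly_coeff_eq_sum_minors t ht, X.charpoly_monic.leadingCoeff,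
    charpoly_natDegree_eq_dim, Nat.sub_sub_self ht, one_mul] at vieta
  exact (mul_left_cancel₀ (pow_ne_zero t (neg_ne_zero.2 one_ne_zero)) vieta).symm

theorem esym_eq_principalMinorSum {k t : ℕ} (ht : t ≤ k) (X : Matrix (Fin k) (Fin k) ℂ) :
    esym t X = principalMinorSum t X :=
  esymm_roots_charpoly_eq_principalMinorSum (IsAlgClosed.splits _) (by simpa using ht)

theorem trace_compound (X : Matrix n n R) :
    (compound ι X).trace = (Fintype.card ι)! * principalMinorSum (Fintype.card ι) X := by
  have minor_eq_zero (f : ι → n) (hf : f ∉ Set.range ((↑) : (ι ↪ n) → ι → n)) :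
      (X.submatrix f f).det = 0 := by
    have not_injective : ¬ Function.Injective f := fun inj => hf ⟨⟨f, inj⟩, rfl⟩
    obtain ⟨i, j, hij, hne⟩ := Function.not_injective_iff.1 not_injective
    exact det_zero_of_row_eq hne (by ext a; simp only [submatrix_apply, hij])
  have maps_to (f : ι ↪ n) (_ : f ∈ univ) : univ.map f ∈ univ.powersetCard (Fintype.card ι) := by
    simp [mem_powersetCard]
  calc (compound ι X).trace
      = ∑ f : ι ↪ n, (X.submatrix f f).det :=
        (Fintype.sum_of_injective _ DFunLike.coe_injective _ _ minor_eq_zero fun _ => rfl).symm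
    _ = ∑ f : ι ↪ n, (X.submatrix (Subtype.val : univ.map f → n) Subtype.val).det :=
        sum_congr rfl fun f _ => det_submatrix_embedding X f
    _ = ∑ s ∈ univ.powersetCard (Fintype.card ι), ∑ f : ι ↪ n with univ.map f = s,
          (X.submatrix (Subtype.val : s → n) Subtype.val).det :=
        (sum_fiberwise_of_maps_to' maps_to fun s =>
          (X.submatrix (Subtype.val : s → n) Subtype.val).det).symm
    _ = (Fintype.card ι)! * principalMinorSum (Fintype.card ι) X := by
        rw [principalMinorSum, mul_sum]
        refine sum_congr rfl fun s hs => ?_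
        rw [sum_const, card_filter_map_univ_eq (mem_powersetCard.1 hs).2, nsmul_eq_mul]

end PrincipalMinorSum

section PosSemidef

variable {ι n 𝕜 : Type*} [Fintype ι] [DecidableEq ι] [RCLike 𝕜]

theorem posSemidef_compound [Finite n] {M : Matrix n n 𝕜} (hM : M.PosSemidef) :
    (compound ι M).PosSemidef := by
  classical
  have := Fintype.ofFinite n
  open scoped MatrixOrder in
  obtain ⟨N, rfl⟩ := CStarAlgebra.nonneg_iff_eq_star_mul_self.mp hM.nonneg
  have gram : compound ι (star N * N) =
      ((Fintype.card ι)! : 𝕜)⁻¹ • ((compound ι N)ᴴ * compound ι N) := by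
    rw [← compound_conjTranspose, compound_mul, star_eq_conjTranspose,
      inv_smul_smul₀ (Nat.cast_ne_zero.2 (Nat.factorial_ne_zero _))]
  rw [gram]
  exact (posSemidef_conjTranspose_mul_self _).smul (inv_nonneg.2 (Nat.cast_nonneg _))

theorem posSemidef_fromBlocks_compound [Finite n] {A B C : Matrix n n 𝕜}
    (h : (fromBlocks A B Bᴴ C).PosSemidef) :
    (fromBlocks (compound ι A) (compound ι B) (compound ι B)ᴴ (compound ι C)).PosSemidef := by
  have principal : fromBlocks (compound ι A) (compound ι B) (compound ι B)ᴴ (compound ι C) =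
      (compound ι (fromBlocks A B Bᴴ C)).submatrix
        (Sum.elim (Sum.inl ∘ ·) (Sum.inr ∘ ·)) (Sum.elim (Sum.inl ∘ ·) (Sum.inr ∘ ·)) := by
    rw [← compound_conjTranspose]
    ext (f | f) (g | g) <;> rfl
  rw [principal]
  exact (posSemidef_compound h).submatrix _

theorem apply_sub_apply_nonneg_of_posSemidef {M : Matrix n n 𝕜} (hM : M.PosSemidef) (i j : n) :
    0 ≤ (M i i - M i j) + (M j j - M j i) := by
  simpa [dotProduct, mulVec, sub_eq_add_neg] using
    (hM.submatrix ![i, j]).dotProduct_mulVec_nonneg ![1, -1]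

theorem sum_minors_nonneg_of_posSemidef_fromBlocks [Finite n] {A B C : Matrix n n 𝕜}
    (h : (fromBlocks A B Bᴴ C).PosSemidef) (i j : n) :
    0 ≤ (A i i * C j j - A i j * C j i + Bᴴ i i * B j j - Bᴴ i j * B j i) +
      (A j j * C i i - A j i * C i j + Bᴴ j j * B i i - Bᴴ j i * B i j) := by
  have form := apply_sub_apply_nonneg_of_posSemidef (posSemidef_compound (ι := Fin 2) h)
    ![Sum.inl i, Sum.inr j] ![Sum.inl j, Sum.inr i]
  simp only [submatrix_apply, compound_apply, det_fin_two, cons_val_zero, cons_val_one,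
    fromBlocks_apply₁₁, fromBlocks_apply₁₂, fromBlocks_apply₂₁, fromBlocks_apply₂₂] at form
  linear_combination form

theorem trace_mul_add_trace_mul_le_of_posSemidef_fromBlocks [Fintype n] {A B C : Matrix n n 𝕜}
    (h : (fromBlocks A B Bᴴ C).PosSemidef) :
    (A * C).trace + (Bᴴ * B).trace ≤ A.trace * C.trace + Bᴴ.trace * B.trace := by
  let q (i j : n) := A i i * C j j - A i j * C j i + Bᴴ i i * B j j - Bᴴ i j * B j i
  have sum_q : ∑ i, ∑ j, q i j =
      A.trace * C.trace - (A * C).trace + Bᴴ.trace * B.trace - (Bᴴ * B).trace := by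
    simp only [q, sum_sub_distrib, sum_add_distrib, trace, diag_apply, mul_apply, sum_mul_sum]
  have sum_q_nonneg : 0 ≤ 2 * ∑ i, ∑ j, q i j := by
    calc 0 ≤ ∑ i, ∑ j, (q i j + q j i) :=
          sum_nonneg fun i _ => sum_nonneg fun j _ =>
            sum_minors_nonneg_of_posSemidef_fromBlocks h i j
      _ = 2 * ∑ i, ∑ j, q i j := by
          simp only [sum_add_distrib]
          rw [sum_comm (f := fun i j => q j i), two_mul]
  rw [sum_q] at sum_q_nonneg
  refine le_of_mul_le_mul_left ?_ (zero_lt_two (α := 𝕜))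
  linear_combination sum_q_nonneg

theorem stmt19_general [Fintype n] [DecidableEq n] {A B C : Matrix n n 𝕜}
    (h : (fromBlocks A B Bᴴ C).PosSemidef) (t : ℕ) :
    principalMinorSum t (A * C) + principalMinorSum t (Bᴴ * B) ≤
      principalMinorSum t A * principalMinorSum t C +
        principalMinorSum t Bᴴ * principalMinorSum t B := by
  have scaled := trace_mul_add_trace_mul_le_of_posSemidef_fromBlocks
    (posSemidef_fromBlocks_compound (ι := Fin t) h)
  simp only [← compound_conjTranspose, compound_mul, trace_smul, trace_compound,
    Fintype.card_fin, smul_eq_mul] at scaled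
  have pos : (0 : 𝕜) < t ! * t ! := by positivity
  refine le_of_mul_le_mul_left ?_ pos
  linear_combination scaled

end PosSemidef

/-- Theorem 5.3 (second inequality): e_t(A)e_t(C) + e_t(B*)e_t(B) ≥ e_t(AC) + e_t(B*B). -/
theorem stmt19 {k : ℕ} (A B C : Matrix (Fin k) (Fin k) ℂ)
    (h : (Matrix.fromBlocks A B Bᴴ C).PosSemidef)
    (t : ℕ) (ht1 : 1 ≤ t) (htk : t ≤ k) :
    (esym t A * esym t C + esym t Bᴴ * esym t B).re ≥
      (esym t (A * C) + esym t (Bᴴ * B)).re := by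
  simpa only [esym_eq_principalMinorSum htk] using (Complex.le_def.1 (stmt19_general h t)).1
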